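/- Let p be an odd prime, let r ≥ 1, and let u : Fin r → ℤ_pˣ be units of the ring of p-adic integers. The diagonal quadratic form ∑ i, (u i) * (x i)^2 is anisotropic over ℚ_p if and only if the residue diagonal form ∑ i, (ū i) * (x i)^2 is anisotropic over 𝔽_p = ZMod p, where ū i denotes the image of u i under the residue map ℤ_p → ZMod p. -/

import Mathlib

/-!
Both forms are compared with the same form over `ℤ_[p]`. Clearing denominators identifies
anisotropy over `ℚ_[p]` with anisotropy over `ℤ_[p]`. A nonzero integral zero can be divided by a
coordinate of least valuation; it then has a coordinate equal to `1`, so its reduction is a nonzero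
residue zero. Conversely, at a nonzero coordinate of a residue zero the partial derivative
`2 * uⱼ * xⱼ` does not vanish, so Hensel's lemma in that single coordinate lifts the zero to
`ℤ_[p]`. The argument works over every Henselian valuation ring whose residue characteristic is
not two.
-/

open IsLocalRing Polynomial QuadraticMap

theorem map_weightedSumSquares {R S ι : Type*} [CommRing R] [CommRing S] [Fintype ι]
    (f : R →+* S) (w x : ι → R) :
    f (weightedSumSquares R w x) = weightedSumSquares S (fun i => f (w i)) fun i => f (x i) := by
  simp

theorem anisotropic_weightedSumSquares_localization_iff {R K ι : Type*} [CommRing R] [CommRing K]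
    [Algebra R K] [Fintype ι] {M : Submonoid R} (hM : M ≤ nonZeroDivisors R) [IsLocalization M K]
    (w : ι → R) :
    (weightedSumSquares K fun i => algebraMap R K (w i)).Anisotropic ↔
      (weightedSumSquares R w).Anisotropic := by
  have hinj : Function.Injective (algebraMap R K) := IsLocalization.injective K hM
  constructor
  · intro hK x hx
    have hx_map := hK (fun i => algebraMap R K (x i)) (by
      rw [← map_weightedSumSquares, hx, map_zero])
    exact funext fun i => (map_eq_zero_iff _ hinj).1 (congrFun hx_map i)
  · intro hR x hx
    obtain ⟨b, hb⟩ := IsLocalization.exist_integer_multiples_of_finite M x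
    choose y hy using hb
    have hxy : (fun i => algebraMap R K (y i)) = algebraMap R K b • x :=
      funext fun i => by rw [hy, Pi.smul_apply, algebraMap_smul]
    have hy_zero : y = 0 := hR y <| hinj <| by
      rw [map_weightedSumSquares, hxy, QuadraticMap.map_smul, hx, smul_zero, map_zero]
    have hbx : algebraMap R K b • x = 0 := by
      rw [← hxy, hy_zero]
      exact funext fun _ => map_zero _
    exact (IsLocalization.map_units K b).smul_eq_zero.1 hbx

section ValuationRing

variable {R ι : Type*} [CommRing R] [IsDomain R] [ValuationRing R]

theorem exists_eq_smul_apply_eq_one [Finite ι] {x : ι → R} (hx : x ≠ 0) :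
    ∃ (c : R) (y : ι → R) (k : ι), c ≠ 0 ∧ x = c • y ∧ y k = 1 := by
  obtain ⟨j, hj⟩ := Function.ne_iff.1 hx
  have : Nonempty ι := ⟨j⟩
  have hdirected : Directed (fun a b : R => b ∣ a) x := fun i i' =>
    (ValuationRing.dvd_total (x i) (x i')).elim (fun h => ⟨i, dvd_rfl, h⟩) fun h => ⟨i', h, dvd_rfl⟩
  have : IsTrans R fun a b => b ∣ a := ⟨fun _ _ _ hab hbc => hbc.trans hab⟩
  obtain ⟨k, hk⟩ := hdirected.finite_le id
  have hk_ne : x k ≠ 0 := ne_zero_of_dvd_ne_zero hj (hk j)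
  choose y hy using hk
  exact ⟨x k, y, k, hk_ne, funext hy, (mul_eq_left₀ hk_ne).1 (hy k).symm⟩

theorem anisotropic_weightedSumSquares_of_map {S : Type*} [CommRing S] [Nontrivial S] [Fintype ι]
    (f : R →+* S) {w : ι → R} (hS : (weightedSumSquares S fun i => f (w i)).Anisotropic) :
    (weightedSumSquares R w).Anisotropic := by
  intro x hx
  by_contra hx_ne
  obtain ⟨c, y, k, hc, rfl, hyk⟩ := exists_eq_smul_apply_eq_one hx_ne
  have hy : weightedSumSquares R w y = 0 := by
    rw [QuadraticMap.map_smul] at hx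
    exact (smul_eq_zero.1 hx).resolve_left (mul_ne_zero hc hc)
  have hfy := hS (fun i => f (y i)) (by rw [← map_weightedSumSquares, hy, map_zero])
  simpa [hyk] using congrFun hfy k

end ValuationRing

section Henselian

theorem henselianLocalRing_of_henselianRing_maximalIdeal {R : Type*} [CommRing R]
    [IsLocalRing R] [HenselianRing R (maximalIdeal R)] :
    HenselianLocalRing R where
  is_henselian f hf a₀ h₀ h₁ := HenselianRing.is_henselian f hf a₀ h₀ (h₁.map _)

instance henselianLocalRing_padicInt (p : ℕ) [Fact p.Prime] : HenselianLocalRing ℤ_[p] :=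
  henselianLocalRing_of_henselianRing_maximalIdeal

variable {R k : Type*} [CommRing R] [HenselianLocalRing R] [Field k] {π : R →+* k}

theorem exists_mul_sq_add_eq_zero_of_residue (hπ : Function.Surjective π) (h2 : (2 : k) ≠ 0)
    {a c y : R} (ha : IsUnit a) (hy : π y ≠ 0) (h : π (a * y ^ 2 + c) = 0) :
    ∃ z, a * z ^ 2 + c = 0 ∧ π z = π y := by
  have := IsLocalHom.of_surjective π hπ
  have hmem (x : R) : x ∈ maximalIdeal R ↔ π x = 0 := by
    rw [← ker_eq_maximalIdeal π hπ, RingHom.mem_ker]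
  obtain ⟨a, rfl⟩ := ha
  -- Mathlib's Henselian property concerns monic polynomials, hence the division by `a`.
  set F : R[X] := X ^ 2 + C (↑a⁻¹ * c)
  have heval (z : R) : F.eval z = ↑a⁻¹ * (a * z ^ 2 + c) := by simp [F, mul_add]
  have hderiv : IsUnit (F.derivative.eval y) := by
    refine IsUnit.of_map π _ (IsUnit.mk0 _ ?_)
    simpa [F, one_add_one_eq_two, map_ofNat] using And.intro h2 hy
  obtain ⟨z, hz, hzy⟩ := HenselianLocalRing.is_henselian F (monic_X_pow_add_C _ two_ne_zero) y
    (by rw [hmem, heval, map_mul, h, mul_zero]) hderiv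
  refine ⟨z, ?_, ?_⟩
  · rwa [IsRoot, heval, Units.mul_right_eq_zero] at hz
  · rwa [hmem, map_sub, sub_eq_zero] at hzy

variable {ι : Type*} [Fintype ι]

theorem exists_weightedSumSquares_eq_zero_of_residue (hπ : Function.Surjective π)
    (h2 : (2 : k) ≠ 0) {w : ι → R} {x : ι → k}
    (hx : weightedSumSquares k (fun i => π (w i)) x = 0) {j : ι} (hwj : IsUnit (w j))
    (hxj : x j ≠ 0) :
    ∃ z : ι → R, weightedSumSquares R w z = 0 ∧ ∀ i, π (z i) = x i := by
  classical
  choose y hy using fun i => hπ (x i)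
  set c := ∑ i ∈ {j}ᶜ, w i * y i ^ 2
  have hsplit (t : R) : weightedSumSquares R w (Function.update y j t) = w j * t ^ 2 + c := by
    rw [weightedSumSquares_apply, Fintype.sum_eq_add_sum_compl j, Function.update_self]
    simp only [smul_eq_mul, ← pow_two]
    congr 1
    refine Finset.sum_congr rfl fun i hi => ?_
    rw [Function.update_of_ne (by simpa using hi)]
  have hyj : π (w j * y j ^ 2 + c) = 0 := by
    rw [← hsplit, Function.update_eq_self, map_weightedSumSquares]
    simpa only [hy] using hx
  obtain ⟨t, ht, hty⟩ := exists_mul_sq_add_eq_zero_of_residue hπ h2 hwj (by rwa [hy]) hyj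
  refine ⟨Function.update y j t, (hsplit t).trans ht, fun i => ?_⟩
  obtain rfl | hij := eq_or_ne i j
  · rw [Function.update_self, hty, hy]
  · rw [Function.update_of_ne hij, hy]

theorem anisotropic_weightedSumSquares_residue (hπ : Function.Surjective π) (h2 : (2 : k) ≠ 0)
    {w : ι → R} (hw : ∀ i, IsUnit (w i)) (hR : (weightedSumSquares R w).Anisotropic) :
    (weightedSumSquares k fun i => π (w i)).Anisotropic := by
  intro x hx
  by_contra hx_ne
  obtain ⟨j, hj⟩ := Function.ne_iff.1 hx_ne
  obtain ⟨z, hz, hzx⟩ := exists_weightedSumSquares_eq_zero_of_residue hπ h2 hx (hw j) hj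
  refine hj ?_
  rw [← hzx, hR z hz, Pi.zero_apply, map_zero, Pi.zero_apply]

end Henselian

theorem padic_unit_form_anisotropic_iff_residue_general {R K k ι : Type*} [CommRing R] [IsDomain R]
    [ValuationRing R] [HenselianLocalRing R] [Field K] [Algebra R K] [IsFractionRing R K] [Field k]
    [Fintype ι] {π : R →+* k} (hπ : Function.Surjective π) (h2 : (2 : k) ≠ 0) (u : ι → Rˣ) :
    (weightedSumSquares K fun i => algebraMap R K (u i)).Anisotropic ↔
      (weightedSumSquares k fun i => π (u i)).Anisotropic :=
  (anisotropic_weightedSumSquares_localization_iff (le_refl (nonZeroDivisors R)) _).trans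
    ⟨anisotropic_weightedSumSquares_residue hπ h2 fun i => (u i).isUnit,
      anisotropic_weightedSumSquares_of_map π⟩

/-- A diagonal quadratic form over ℚ_p (p odd) whose coefficients are units of ℤ_p
is anisotropic over ℚ_p if and only if its residue form is anisotropic over 𝔽_p. -/
theorem padic_unit_form_anisotropic_iff_residue
    (p : ℕ) [Fact p.Prime] (hp : p ≠ 2) (r : ℕ) (hr : 1 ≤ r) (u : Fin r → ℤ_[p]ˣ) :
    (∀ x : Fin r → ℚ_[p], ∑ i, ((u i : ℤ_[p]) : ℚ_[p]) * (x i) ^ 2 = 0 → x = 0) ↔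
      (∀ x : Fin r → ZMod p,
        ∑ i, PadicInt.toZMod ((u i : ℤ_[p])) * (x i) ^ 2 = 0 → x = 0) := by
  have h2 : (2 : ZMod p) ≠ 0 := Ring.two_ne_zero (by rwa [ZMod.ringChar_zmod_n])
  simpa [Anisotropic, ← pow_two] using padic_unit_form_anisotropic_iff_residue_general
    (K := ℚ_[p]) (ZMod.ringHom_surjective PadicInt.toZMod) h2 u
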